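/- arXiv:2503.20716 — 2 statements merged into one kernel-verified Lean document; each statement's English description precedes it below -/
import Mathlib

section
/- Let E be a real normed vector space, N ≥ 1 an integer, and ρ, σ, γ > 0 constants with (ρ+1)γ/σ < 1. Let y^k ∈ E, λᵢ^k ∈ E (i = 1,…,N) and xᵢ^k ∈ E be sequences indexed by k ≥ 1, and y*, λᵢ* ∈ E fixed. Assume that for every k ≥ 1: (i) Σᵢ ‖xᵢ^{k+1} − y*‖ ≤ (1/σ) Σᵢ (ρ‖y^k − y*‖ + ‖λᵢ^k − λᵢ*‖); (ii) N·‖y^{k+1} − y*‖ ≤ γ Σᵢ ‖xᵢ^{k+1} − y*‖; (iii) Σᵢ ‖λᵢ^{k+1} − λᵢ*‖ ≤ γ Σᵢ ‖xᵢ^{k+1} − y*‖. Then for every k ≥ 1, (ρN/σ)‖y^k − y*‖ + (1/σ) Σᵢ ‖λᵢ^k − λᵢ*‖ ≤ ((ρ+1)γ/σ)^{k−1} · [ (ρN/σ)‖y¹ − y*‖ + (1/σ) Σᵢ ‖λᵢ¹ − λᵢ*‖ ], i.e. the quantity (ρN/σ)‖y^k − y*‖ + (1/σ)Σᵢ‖λᵢ^k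 − λᵢ*‖ converges linearly to 0 with rate (ρ+1)γ/σ. -/
open Finset

/-- Theorem 2 of the paper: local linear convergence of FC-ALADIN for smooth,
possibly non-convex consensus problems, with rate `(ρ+1)γ/σ < 1`. -/
theorem fc_aladin_local_linear_convergence {E : Type*} [NormedAddCommGroup E]
    [NormedSpace ℝ E] (N : ℕ) (hN : 1 ≤ N) (ρ σ γ : ℝ)
    (hρ : 0 < ρ) (hσ : 0 < σ) (hγ : 0 < γ) (hrate : (ρ + 1) * γ / σ < 1)
    (y : ℕ → E) (lam x : ℕ → Fin N → E) (ystar : E) (lamstar : Fin N → E)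
    (h1 : ∀ k, 1 ≤ k → ∑ i, ‖x (k + 1) i - ystar‖ ≤
        (1 / σ) * ∑ i, (ρ * ‖y k - ystar‖ + ‖lam k i - lamstar i‖))
    (h2 : ∀ k, 1 ≤ k → (N : ℝ) * ‖y (k + 1) - ystar‖ ≤
        γ * ∑ i, ‖x (k + 1) i - ystar‖)
    (h3 : ∀ k, 1 ≤ k → ∑ i, ‖lam (k + 1) i - lamstar i‖ ≤
        γ * ∑ i, ‖x (k + 1) i - ystar‖) :
    ∀ k, 1 ≤ k →
      (ρ * N / σ) * ‖y k - ystar‖ + (1 / σ) * ∑ i, ‖lam k i - lamstar i‖ ≤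
        ((ρ + 1) * γ / σ) ^ (k - 1) *
          ((ρ * N / σ) * ‖y 1 - ystar‖ + (1 / σ) * ∑ i, ‖lam 1 i - lamstar i‖) := by
  intro k hk
  induction k, hk using Nat.le_induction with
  | base => simp
  | succ k hk ih =>
    have e1 := h1 k hk
    have e2 := h2 k hk
    have e3 := h3 k hk
    rw [Finset.sum_add_distrib, Finset.sum_const, Finset.card_univ, Fintype.card_fin,
      nsmul_eq_mul] at e1
    generalize ∑ i, ‖x (k + 1) i - ystar‖ = X at e1 e2 e3
    have hc : 0 ≤ (ρ + 1) * γ / σ := by positivity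
    have hp : k + 1 - 1 = (k - 1) + 1 := by omega
    rw [hp, pow_succ']
    calc (ρ * N / σ) * ‖y (k + 1) - ystar‖ + (1 / σ) * ∑ i, ‖lam (k + 1) i - lamstar i‖
        = (ρ / σ) * (N * ‖y (k + 1) - ystar‖)
          + (1 / σ) * ∑ i, ‖lam (k + 1) i - lamstar i‖ := by ring
      _ ≤ (ρ / σ) * (γ * X) + (1 / σ) * (γ * X) := by gcongr
      _ = ((ρ + 1) * γ / σ) * X := by ring
      _ ≤ ((ρ + 1) * γ / σ) * ((ρ * N / σ) * ‖y k - ystar‖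
          + (1 / σ) * ∑ i, ‖lam k i - lamstar i‖) := by
        apply mul_le_mul_of_nonneg_left _ hc
        refine e1.trans (le_of_eq ?_)
        ring
      _ ≤ _ := by
        rw [mul_assoc]
        exact mul_le_mul_of_nonneg_left ih hc
end

section
/- Let E be a real inner product space, N ≥ 1, and f₁,…,f_N : E → ℝ. Let y* ∈ E, G > 0, p ∈ (0,1], and K ≥ 2. Let y^k ∈ E (k = 1,…,K+1) and xᵢ^k ∈ E (i = 1,…,N) be sequences, and for each k let Ψ_min^k > 0 and Ψ_max^k > 0 be scalars. Define D_k = Σᵢ ( fᵢ(y^k) + fᵢ(xᵢ^{k+1}) ) − 2 Σᵢ fᵢ(y*) and assume D_k ≥ 0 for 1 ≤ k ≤ K. Assume that for every k with 2 ≤ k ≤ K the per-iteration descent inequality holds: 2Ψ_min^k·( p·D_k + (1−p)·D_{k−1} ) ≤ p·‖y^k − y*‖² + (1−p)·‖y^{k−1} − y*‖² − ‖y^{k+1} − y*‖² + 4(Ψ_max^k)²G² + 2Ψ_max^k·G·( p·Σᵢ‖y^k − xᵢ^{k+1}‖ + (1−p)·Σᵢ‖y^{k−1} − xᵢ^{k}‖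 ). Then min_{1 ≤ k ≤ K} D_k ≤ [ (1−p)‖y¹ − y*‖² + ‖y² − y*‖² + Σ_{k=2}^{K} ( 4(Ψ_max^k)²G² + 2Ψ_max^k·G·( p·Σᵢ‖y^k − xᵢ^{k+1}‖ + (1−p)·Σᵢ‖y^{k−1} − xᵢ^{k}‖ ) ) ] / ( 2 Σ_{k=2}^{K} Ψ_min^k ). -/
open Finset

/-- Quantitative form of Theorem 3 of the paper: conditional on the per-iteration
descent inequality (38)–(39) of Inexact FC-ALADIN, the best objective gap over the
first `K` iterations is bounded by the telescoped error terms divided by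
`2 Σ_{k=2}^K Ψ_min^k`. -/
theorem inexact_fc_aladin_convergence {E : Type*} [NormedAddCommGroup E]
    [InnerProductSpace ℝ E] (N : ℕ) (hN : 1 ≤ N) (f : Fin N → E → ℝ)
    (ystar : E) (G : ℝ) (hG : 0 < G) (p : ℝ) (hp0 : 0 < p) (hp1 : p ≤ 1)
    (K : ℕ) (hK : 2 ≤ K) (y : ℕ → E) (x : ℕ → Fin N → E)
    (Ψmin Ψmax : ℕ → ℝ)
    (hΨmin : ∀ k, 1 ≤ k → k ≤ K → 0 < Ψmin k)
    (hΨmax : ∀ k, 1 ≤ k → k ≤ K → 0 < Ψmax k)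
    (D : ℕ → ℝ)
    (hD : ∀ k, D k = ∑ i, (f i (y k) + f i (x (k + 1) i)) - 2 * ∑ i, f i ystar)
    (hDnn : ∀ k, 1 ≤ k → k ≤ K → 0 ≤ D k)
    (hrec : ∀ k, 2 ≤ k → k ≤ K →
      2 * Ψmin k * (p * D k + (1 - p) * D (k - 1)) ≤
        p * ‖y k - ystar‖ ^ 2 + (1 - p) * ‖y (k - 1) - ystar‖ ^ 2 -
          ‖y (k + 1) - ystar‖ ^ 2 + 4 * Ψmax k ^ 2 * G ^ 2 +
          2 * Ψmax k * G * (p * ∑ i, ‖y k - x (k + 1) i‖ +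
            (1 - p) * ∑ i, ‖y (k - 1) - x k i‖)) :
    (Finset.Icc 1 K).inf' (Finset.nonempty_Icc.mpr (by omega)) D ≤
      ((1 - p) * ‖y 1 - ystar‖ ^ 2 + ‖y 2 - ystar‖ ^ 2 +
          ∑ k ∈ Finset.Icc 2 K, (4 * Ψmax k ^ 2 * G ^ 2 +
            2 * Ψmax k * G * (p * ∑ i, ‖y k - x (k + 1) i‖ +
              (1 - p) * ∑ i, ‖y (k - 1) - x k i‖))) /
        (2 * ∑ k ∈ Finset.Icc 2 K, Ψmin k) := by
  set m := (Finset.Icc 1 K).inf' (Finset.nonempty_Icc.mpr (by omega)) D with hm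
  have hmle : ∀ k, 1 ≤ k → k ≤ K → m ≤ D k := fun k h1 h2 =>
    Finset.inf'_le D (Finset.mem_Icc.mpr ⟨h1, h2⟩)
  set e : ℕ → ℝ := fun k => 4 * Ψmax k ^ 2 * G ^ 2 +
            2 * Ψmax k * G * (p * ∑ i, ‖y k - x (k + 1) i‖ +
              (1 - p) * ∑ i, ‖y (k - 1) - x k i‖) with he
  have hstep : ∀ k, 2 ≤ k → k ≤ K → m * (2 * Ψmin k) ≤
      p * ‖y k - ystar‖ ^ 2 + (1 - p) * ‖y (k - 1) - ystar‖ ^ 2 -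
          ‖y (k + 1) - ystar‖ ^ 2 + e k := by
    intro k h2 hk
    have h := hrec k h2 hk
    have hψ := hΨmin k (by omega) hk
    have h1 : m ≤ p * D k + (1 - p) * D (k - 1) := by
      have a1 := mul_le_mul_of_nonneg_left (hmle k (by omega) hk) hp0.le
      have a2 := mul_le_mul_of_nonneg_left (hmle (k - 1) (by omega) (by omega))
        (sub_nonneg.mpr hp1)
      linarith
    have h3 := mul_le_mul_of_nonneg_left h1 (by positivity : 0 ≤ 2 * Ψmin k)
    simp only [he]
    linarith
  have key : ∀ n, 1 ≤ n → n ≤ K → m * (2 * ∑ k ∈ Finset.Icc 2 n, Ψmin k) ≤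
      (1 - p) * ‖y 1 - ystar‖ ^ 2 + ‖y 2 - ystar‖ ^ 2 + ∑ k ∈ Finset.Icc 2 n, e k
        - (‖y (n + 1) - ystar‖ ^ 2 + (1 - p) * ‖y n - ystar‖ ^ 2) := by
    intro n hn
    induction n, hn using Nat.le_induction with
    | base => intro _; simp; linarith
    | succ n hn ih =>
      intro hnK
      have h1 := ih (by omega)
      have h2 := hstep (n + 1) (by omega) hnK
      rw [Finset.sum_Icc_succ_top (by omega), Finset.sum_Icc_succ_top (by omega)]
      simp only [Nat.add_sub_cancel] at h2
      linarith
  have hpos : 0 < ∑ k ∈ Finset.Icc 2 K, Ψmin k := by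
    apply Finset.sum_pos
    · intro k hk
      rw [Finset.mem_Icc] at hk
      exact hΨmin k (by omega) hk.2
    · exact Finset.nonempty_Icc.mpr hK
  rw [le_div_iff₀ (by positivity)]
  have h := key K (by omega) le_rfl
  have h1 := mul_nonneg (sub_nonneg.mpr hp1) (sq_nonneg ‖y K - ystar‖)
  have h2 := sq_nonneg ‖y (K + 1) - ystar‖
  linarith
end
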